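/- Fix integers j, k ≥ 2 and let d = k if k is even and d = k − 1 if k is odd. For every real α with 0 < α < d/k, the growth rate of the degree-1 pseudoweight (i.e., codeword weight) distribution of the (j,k)-regular configuration-model LDPC ensemble equals G_1(α) = (j/k)·log[ ((1 + x_0)^k + (1 − x_0)^k)/2 ] − jα·log x_0 − (j−1)·h(α), where x_0 is the unique positive real solution of α·[(1 + x_0)^k + (1 − x_0)^k] = x_0·[(1 + x_0)^{k−1} − (1 − x_0)^{k−1}] and h(α) = −α log α − (1−α) log(1−α) is the binary entropy function. -/

import Mathlib

open Finset

/-- The variable node owning variable socket `s` (each of the `n` variable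
nodes has `j` sockets). -/
def varNode (n j : ℕ) (s : Fin (n * j)) : Fin n :=
  ⟨s.val / j, by
    rcases Nat.eq_zero_or_pos j with hj | hj
    · exact absurd s.isLt (by simp [hj])
    · exact (Nat.div_lt_iff_lt_mul hj).mpr s.isLt⟩

/-- The `i`-th socket of check node `c` (each of the `m = nj/k` check nodes has
`k` sockets), as an index among all `nj = mk` sockets. -/
def checkSocket (n j k : ℕ) (c : Fin (n * j / k)) (i : Fin k) : Fin (n * j) :=
  ⟨c.val * k + i.val, by
    have h1 : c.val * k + i.val < (c.val + 1) * k := by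
      rw [Nat.succ_mul]; exact Nat.add_lt_add_left i.isLt _
    have h2 : (c.val + 1) * k ≤ (n * j / k) * k := Nat.mul_le_mul_right k c.isLt
    have h3 : (n * j / k) * k ≤ n * j := Nat.div_mul_le_self _ _
    omega⟩

/-- `z : {1,…,n} → {0,1}` is a codeword (degree-1 pseudocodeword) of the
configuration given by the socket matching `σ`: every check node has an even
number of incident edges labelled `1`, each edge inheriting the label of its
variable node. -/
def IsCodeword (n j k : ℕ) (σ : Equiv.Perm (Fin (n * j)))
    (z : Fin n → Fin 2) : Prop :=
  ∀ c : Fin (n * j / k),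
    Even (∑ i : Fin k, (z (varNode n j (σ.symm (checkSocket n j k c i))) : ℕ))

/-- The number of codewords of weight `α n` of the configuration given by `σ`. -/
noncomputable def countWeight (n j k : ℕ) (σ : Equiv.Perm (Fin (n * j)))
    (α : ℝ) : ℕ :=
  Nat.card {z : Fin n → Fin 2 //
    IsCodeword n j k σ z ∧
      (((Finset.univ.filter fun i : Fin n => z i = 1).card : ℝ) = α * (n : ℝ))}

/-- The expected number, over a uniformly random matching `σ` of the `nj`
variable sockets to the `nj = mk` check sockets, of codewords of weight `α n`. -/
noncomputable def expectWeight (n j k : ℕ) (α : ℝ) : ℝ :=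
  (∑ σ : Equiv.Perm (Fin (n * j)), (countWeight n j k σ α : ℝ)) /
    (Nat.factorial (n * j) : ℝ)

/-!
The permutations of the sockets act transitively on the sets of `j * w` sockets, so a word of weight
`w` is a codeword with probability `[X ^ (j * w)] E ^ (n * j / k) / (n * j).choose (j * w)`, where
`E = ((1 + X) ^ k + (1 - X) ^ k) / 2` enumerates the even subsets of the sockets of one check node.
There are `n.choose w` such words, so the growth rate is a combination of growth rates of
coefficients `[X ^ t] P ^ m` with `t = m * μ`, for `P = E` and (for the binomials) `P = 1 + X`.

Each of these is `log (P x) - μ * log x`, where `x * P' x = μ * P x`. Indeed, tilting `P` at `x`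
gives the mass function of a random variable with mean `μ`, so it suffices that the coefficient of
a power of a probability generating function at its mean decays subexponentially. As `E` has only
even exponents, it is treated as a polynomial in `X ^ 2`.
-/

section CoefficientGrowth

open Filter Polynomial
open scoped Topology

variable {P Q : ℝ[X]}

theorem coeff_mul_coeff_le_coeff_mul (hP : ∀ i, 0 ≤ P.coeff i) (hQ : ∀ i, 0 ≤ Q.coeff i)
    (a b : ℕ) : P.coeff a * Q.coeff b ≤ (P * Q).coeff (a + b) := by
  rw [coeff_mul]
  exact single_le_sum (f := fun p : ℕ × ℕ => P.coeff p.1 * Q.coeff p.2)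
    (fun p _ => mul_nonneg (hP _) (hQ _)) (mem_antidiagonal.mpr (rfl : (a, b).1 + (a, b).2 = _))

theorem coeff_pow_nonneg (hP : ∀ i, 0 ≤ P.coeff i) (m i : ℕ) : 0 ≤ (P ^ m).coeff i := by
  induction m generalizing i with
  | zero => rw [pow_zero, coeff_one]; positivity
  | succ m ih =>
    rw [pow_succ, coeff_mul]
    exact sum_nonneg fun p _ => mul_nonneg (ih _) (hP _)

theorem coeff_le_eval_one (hP : ∀ i, 0 ≤ P.coeff i) (i : ℕ) : P.coeff i ≤ P.eval 1 := by
  rw [eval_eq_sum_range' (n := max P.natDegree i + 1) (by omega)]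
  simp only [one_pow, mul_one]
  exact single_le_sum (fun i _ => hP i) (by simp)

theorem pow_le_coeff_pow {b : ℝ} {d : ℕ} (hP : ∀ i, 0 ≤ P.coeff i) (hb : 0 ≤ b)
    (hPb : ∀ i ≤ d, b ≤ P.coeff i) {q s : ℕ} (hs : s ≤ d * q) : b ^ q ≤ (P ^ q).coeff s := by
  induction q generalizing s with
  | zero => simp [show s = 0 by omega]
  | succ q ih =>
    calc b ^ (q + 1) = b ^ q * b := pow_succ b q
      _ ≤ (P ^ q).coeff (s - min s d) * P.coeff (min s d) :=
        mul_le_mul (ih (by rw [mul_add] at hs; omega)) (hPb _ (min_le_right s d)) hb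
          (coeff_pow_nonneg hP q _)
      _ ≤ (P ^ q * P).coeff (s - min s d + min s d) :=
        coeff_mul_coeff_le_coeff_mul (coeff_pow_nonneg hP q) hP _ _
      _ = (P ^ (q + 1)).coeff s := by rw [pow_succ, Nat.sub_add_cancel (min_le_left s d)]

/-- The second moment about `c` of the measure on `ℕ` that gives `t` the mass `P.coeff t`. -/
noncomputable def secondMoment (P : ℝ[X]) (c : ℝ) : ℝ := P.sum fun t a => a * (t - c) ^ 2

theorem secondMoment_eq_eval_derivative (P : ℝ[X]) (c : ℝ) :
    secondMoment P c = P.derivative.derivative.eval 1 + (1 - 2 * c) * P.derivative.eval 1 +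
      c ^ 2 * P.eval 1 := by
  induction P using Polynomial.induction_on' with
  | add P Q hP hQ =>
    have hadd : secondMoment (P + Q) c = secondMoment P c + secondMoment Q c :=
      sum_add_index _ _ _ (by simp) (fun t a b => add_mul a b _)
    simp only [hadd, hP, hQ, derivative_add, eval_add]
    ring
  | monomial t a =>
    rw [secondMoment, sum_monomial_index _ _ (by simp)]
    cases t with
    | zero => simp [mul_comm]
    | succ t =>
      simp only [derivative_monomial, Nat.add_sub_cancel, eval_monomial, one_pow, mul_one,
        Nat.cast_succ]
      ring

theorem secondMoment_mul (hP : P.eval 1 = 1) (hQ : Q.eval 1 = 1) :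
    secondMoment (P * Q) (P.derivative.eval 1 + Q.derivative.eval 1) =
      secondMoment P (P.derivative.eval 1) + secondMoment Q (Q.derivative.eval 1) := by
  simp only [secondMoment_eq_eval_derivative, derivative_mul, derivative_add, eval_add, eval_mul,
    hP, hQ]
  ring

theorem eval_derivative_pow_one (hP : P.eval 1 = 1) (m : ℕ) :
    (P ^ m).derivative.eval 1 = m * P.derivative.eval 1 := by
  simp [derivative_pow, hP]

theorem secondMoment_pow (hP : P.eval 1 = 1) (m : ℕ) :
    secondMoment (P ^ m) (m * P.derivative.eval 1) = m * secondMoment P (P.derivative.eval 1) := by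
  induction m with
  | zero => simp [secondMoment_eq_eval_derivative]
  | succ m ih =>
    have hmul := secondMoment_mul (P := P ^ m) (by simp [hP]) hP
    rw [eval_derivative_pow_one hP, ih, ← pow_succ] at hmul
    push_cast
    rw [add_one_mul, hmul]
    ring

theorem half_le_sum_coeff_of_secondMoment_le (hP : ∀ i, 0 ≤ P.coeff i) (hP1 : P.eval 1 = 1)
    {c R : ℝ} (hR : 0 < R) (hc : 2 * secondMoment P c ≤ R ^ 2) :
    1 / 2 ≤ ∑ t ∈ P.support with |((t : ℕ) : ℝ) - c| ≤ R, P.coeff t := by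
  have markov : R ^ 2 * ∑ t ∈ P.support with ¬|((t : ℕ) : ℝ) - c| ≤ R, P.coeff t ≤
      secondMoment P c := by
    rw [mul_sum]
    refine (sum_le_sum fun t ht => ?_).trans (sum_le_sum_of_subset_of_nonneg (filter_subset _ _)
      fun t _ _ => mul_nonneg (hP t) (sq_nonneg _))
    have hR_lt : R < |(t : ℝ) - c| := not_le.mp (mem_filter.mp ht).2
    calc R ^ 2 * P.coeff t = P.coeff t * R ^ 2 := mul_comm _ _
      _ ≤ P.coeff t * |(t : ℝ) - c| ^ 2 := mul_le_mul_of_nonneg_left (by gcongr) (hP t)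
      _ = P.coeff t * ((t : ℝ) - c) ^ 2 := by rw [sq_abs]
  have total : ∑ t ∈ P.support, P.coeff t = 1 := by
    rw [← hP1, eval_eq_sum, Polynomial.sum]
    simp
  rw [← sum_filter_add_sum_filter_not _ (fun t : ℕ => |(t : ℝ) - c| ≤ R)] at total
  have := pow_pos hR 2
  nlinarith

theorem exists_large_coeff_of_secondMoment_le (hP : ∀ i, 0 ≤ P.coeff i) (hP1 : P.eval 1 = 1)
    {c R : ℝ} (hR : 0 < R) (hc : 2 * secondMoment P c ≤ R ^ 2) :
    ∃ t : ℕ, |(t : ℝ) - c| ≤ R ∧ 1 ≤ 2 * (P.natDegree + 1) * P.coeff t := by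
  have hhalf := half_le_sum_coeff_of_secondMoment_le hP hP1 hR hc
  set s := {t ∈ P.support | |((t : ℕ) : ℝ) - c| ≤ R}
  have hs : s.Nonempty := nonempty_of_sum_ne_zero (by linarith : ∑ t ∈ s, P.coeff t ≠ 0)
  have hcard : (#s : ℝ) ≤ P.natDegree + 1 := by
    exact_mod_cast (card_filter_le _ _).trans (card_supp_le_succ_natDegree P)
  obtain ⟨t, ht, hmax⟩ := exists_max_image s P.coeff hs
  refine ⟨t, (mem_filter.mp ht).2, ?_⟩
  calc (1 : ℝ) = 2 * (1 / 2) := by norm_num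
    _ ≤ 2 * ∑ i ∈ s, P.coeff i := by gcongr
    _ ≤ 2 * (#s * P.coeff t) := by
      gcongr
      exact (sum_le_card_nsmul s _ _ hmax).trans_eq (nsmul_eq_mul _ _)
    _ ≤ 2 * (P.natDegree + 1) * P.coeff t := by
      rw [mul_assoc]
      gcongr
      exact hP t

/- Chebyshev places a large coefficient of `P ^ m` near the target exponent; the remaining `q`
factors make up the difference. -/
theorem pow_le_mul_coeff_pow_add {b δ : ℝ} {d : ℕ} (hP : ∀ i, 0 ≤ P.coeff i) (hP1 : P.eval 1 = 1)
    (hb : 0 ≤ b) (hPb : ∀ i ≤ d, b ≤ P.coeff i) (hδ : 0 < δ) (hδμ : δ ≤ P.derivative.eval 1)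
    (hδd : δ ≤ d - P.derivative.eval 1) {m q t : ℕ} (hq : 0 < q)
    (hmq : 2 * (m * secondMoment P (P.derivative.eval 1)) ≤ (δ * q) ^ 2)
    (ht : (t : ℝ) = (m + q) * P.derivative.eval 1) :
    b ^ q ≤ 2 * (P.natDegree + 1) * (m + q) * (P ^ (m + q)).coeff t := by
  set μ := P.derivative.eval 1
  have hq' : (0 : ℝ) < q := by exact_mod_cast hq
  obtain ⟨u, hu, hlarge⟩ := exists_large_coeff_of_secondMoment_le (P := P ^ m) (c := m * μ)
    (coeff_pow_nonneg hP m) (by simp [hP1]) (mul_pos hδ hq') (by rwa [secondMoment_pow hP1])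
  rw [abs_le] at hu
  obtain ⟨s, rfl⟩ : ∃ s, t = u + s := by
    refine Nat.exists_eq_add_of_le ?_
    have : (u : ℝ) ≤ t := by nlinarith
    exact_mod_cast this
  have hs : s ≤ d * q := by
    push_cast at ht
    have : (s : ℝ) ≤ d * q := by nlinarith
    exact_mod_cast this
  have hdeg : ((P ^ m).natDegree : ℝ) + 1 ≤ (P.natDegree + 1) * (m + q) := by
    have : (P ^ m).natDegree + 1 ≤ (P.natDegree + 1) * (m + q) := by
      nlinarith [natDegree_pow_le (p := P) (n := m)]
    exact_mod_cast this
  have hu0 := coeff_pow_nonneg hP m u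
  calc b ^ q ≤ 1 * (P ^ q).coeff s := by rw [one_mul]; exact pow_le_coeff_pow hP hb hPb hs
    _ ≤ 2 * ((P ^ m).natDegree + 1) * (P ^ m).coeff u * (P ^ q).coeff s := by
      gcongr
      exact coeff_pow_nonneg hP q s
    _ ≤ 2 * ((P.natDegree + 1) * (m + q)) * (P ^ m).coeff u * (P ^ q).coeff s := by
      gcongr
      exact coeff_pow_nonneg hP q s
    _ = 2 * (P.natDegree + 1) * (m + q) * ((P ^ m).coeff u * (P ^ q).coeff s) := by ring
    _ ≤ _ := by
      gcongr
      rw [pow_add]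
      exact coeff_mul_coeff_le_coeff_mul (coeff_pow_nonneg hP m) (coeff_pow_nonneg hP q) u s

theorem tendsto_ceil_mul_sqrt_div {C : ℝ} (hC : 0 ≤ C) :
    Tendsto (fun m : ℕ => (⌈C * √m⌉₊ : ℝ) / m) atTop (𝓝 0) := by
  have hsqrt : Tendsto (fun m : ℕ => √(m : ℝ)) atTop atTop :=
    Real.tendsto_sqrt_atTop.comp tendsto_natCast_atTop_atTop
  have h := ((tendsto_nat_ceil_mul_div_atTop hC).comp hsqrt).mul hsqrt.inv_tendsto_atTop
  rw [mul_zero] at h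
  refine h.congr fun m => ?_
  simp only [Function.comp_apply, Pi.inv_apply]
  rw [← div_eq_mul_inv, div_div, Real.mul_self_sqrt m.cast_nonneg]

theorem tendsto_log_const_mul_div {K : ℝ} (hK : 0 < K) :
    Tendsto (fun m : ℕ => Real.log (K * m) / m) atTop (𝓝 0) := by
  have hlog : Tendsto (fun m : ℕ => Real.log m / m) atTop (𝓝 0) :=
    Real.isLittleO_log_id_atTop.tendsto_div_nhds_zero.comp tendsto_natCast_atTop_atTop
  have h := (tendsto_const_div_atTop_nhds_zero_nat (Real.log K)).add hlog
  rw [add_zero] at h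
  refine h.congr' ?_
  filter_upwards [eventually_gt_atTop 0] with m hm
  rw [Real.log_mul hK.ne' (by positivity), add_div]

theorem eventually_pow_ceil_mul_sqrt_le_mul_coeff_pow {b : ℝ} {d : ℕ} (hP : ∀ i, 0 ≤ P.coeff i)
    (hP1 : P.eval 1 = 1) (hb : 0 ≤ b) (hPb : ∀ i ≤ d, b ≤ P.coeff i)
    (hμ : 0 < P.derivative.eval 1) (hμd : P.derivative.eval 1 < d) :
    ∃ C : ℝ, 0 < C ∧ ∀ᶠ m : ℕ in atTop, ∀ t : ℕ, (t : ℝ) = m * P.derivative.eval 1 →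
      b ^ ⌈C * √m⌉₊ ≤ 2 * (P.natDegree + 1) * m * (P ^ m).coeff t := by
  set μ := P.derivative.eval 1
  set V := secondMoment P μ
  obtain ⟨δ, hδ, hδμ, hδd⟩ : ∃ δ : ℝ, 0 < δ ∧ δ ≤ μ ∧ δ ≤ d - μ :=
    ⟨min μ (d - μ), lt_min hμ (sub_pos.mpr hμd), min_le_left _ _, min_le_right _ _⟩
  obtain ⟨C, hC, hVC⟩ : ∃ C : ℝ, 0 < C ∧ 2 * V ≤ (δ * C) ^ 2 := by
    refine ⟨(2 * |V| + 1) / δ, by positivity, ?_⟩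
    rw [mul_div_cancel₀ _ hδ.ne']
    nlinarith [le_abs_self V, abs_nonneg V]
  refine ⟨C, hC, ?_⟩
  filter_upwards [(tendsto_ceil_mul_sqrt_div hC.le).eventually_lt_const one_pos,
    eventually_gt_atTop 0] with m hqm hm t ht
  have hm' : (0 : ℝ) < m := by exact_mod_cast hm
  have hq : 0 < ⌈C * √m⌉₊ := Nat.ceil_pos.mpr (by positivity)
  have hqC : C * √m ≤ ⌈C * √m⌉₊ := Nat.le_ceil _
  generalize ⌈C * √m⌉₊ = q at *
  obtain ⟨r, rfl⟩ : ∃ r, m = r + q := by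
    rw [div_lt_one hm', Nat.cast_lt] at hqm
    exact Nat.exists_eq_add_of_le' hqm.le
  push_cast at ht hqC ⊢
  refine pow_le_mul_coeff_pow_add hP hP1 hb hPb hδ hδμ hδd hq ?_ ht
  calc 2 * (r * V) = r * (2 * V) := by ring
    _ ≤ r * (δ * C) ^ 2 := by gcongr
    _ ≤ (r + q) * (δ * C) ^ 2 := by gcongr; exact le_add_of_nonneg_right q.cast_nonneg
    _ = (δ * C) ^ 2 * √(r + q) ^ 2 := by rw [Real.sq_sqrt (by positivity), mul_comm]
    _ = (δ * (C * √(r + q))) ^ 2 := by ring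
    _ ≤ (δ * q) ^ 2 := by gcongr

theorem exists_pos_forall_le_coeff {d : ℕ} (hPd : ∀ i ≤ d, 0 < P.coeff i) :
    ∃ b, 0 < b ∧ ∀ i ≤ d, b ≤ P.coeff i := by
  obtain ⟨i, hi, hmin⟩ := exists_min_image (range (d + 1)) P.coeff nonempty_range_add_one
  exact ⟨P.coeff i, hPd i (mem_range_succ_iff.mp hi),
    fun a ha => hmin a (mem_range_succ_iff.mpr ha)⟩

theorem eventually_coeff_pow_pos {d : ℕ} (hP : ∀ i, 0 ≤ P.coeff i)
    (hPd : ∀ i ≤ d, 0 < P.coeff i) (hP1 : P.eval 1 = 1) (hμ : 0 < P.derivative.eval 1)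
    (hμd : P.derivative.eval 1 < d) :
    ∀ᶠ m : ℕ in atTop, ∀ t : ℕ, (t : ℝ) = m * P.derivative.eval 1 → 0 < (P ^ m).coeff t := by
  obtain ⟨b, hb, hPb⟩ := exists_pos_forall_le_coeff hPd
  obtain ⟨C, -, hlower⟩ :=
    eventually_pow_ceil_mul_sqrt_le_mul_coeff_pow hP hP1 hb.le hPb hμ hμd
  filter_upwards [hlower] with m hm t ht
  exact pos_of_mul_pos_right ((pow_pos hb _).trans_le (hm t ht)) (by positivity)

theorem tendsto_log_coeff_pow_div_of_eval_one {d : ℕ} (hP : ∀ i, 0 ≤ P.coeff i)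
    (hPd : ∀ i ≤ d, 0 < P.coeff i) (hP1 : P.eval 1 = 1) (hμ : 0 < P.derivative.eval 1)
    (hμd : P.derivative.eval 1 < d) {ι : Type*} {l : Filter ι} {m t : ι → ℕ}
    (hm : Tendsto m l atTop) (ht : ∀ᶠ i in l, (t i : ℝ) = m i * P.derivative.eval 1) :
    Tendsto (fun i => Real.log ((P ^ m i).coeff (t i)) / m i) l (𝓝 0) := by
  obtain ⟨b, hb, hPb⟩ := exists_pos_forall_le_coeff hPd
  obtain ⟨C, hC, hlower⟩ :=
    eventually_pow_ceil_mul_sqrt_le_mul_coeff_pow hP hP1 hb.le hPb hμ hμd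
  set K : ℝ := 2 * (P.natDegree + 1)
  have hK : 0 < K := by positivity
  have hlim := (((tendsto_ceil_mul_sqrt_div hC.le).mul_const (Real.log b)).sub
    (tendsto_log_const_mul_div hK)).comp hm
  rw [zero_mul, sub_zero] at hlim
  refine tendsto_of_tendsto_of_tendsto_of_le_of_le' hlim tendsto_const_nhds ?_ ?_
  · filter_upwards [hm.eventually hlower, hm.eventually_gt_atTop 0, ht,
      hm.eventually (eventually_coeff_pow_pos hP hPd hP1 hμ hμd)] with i hi hmi hti hpos
    have hlog := Real.log_le_log (pow_pos hb _) (hi _ hti)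
    rw [Real.log_pow, Real.log_mul (by positivity) (hpos _ hti).ne'] at hlog
    simp only [Function.comp_apply]
    rw [div_mul_eq_mul_div, ← sub_div]
    gcongr
    linarith
  · refine Eventually.of_forall fun i => div_nonpos_of_nonpos_of_nonneg ?_ (Nat.cast_nonneg _)
    refine Real.log_nonpos (coeff_pow_nonneg hP _ _) ?_
    simpa [hP1] using coeff_le_eval_one (coeff_pow_nonneg hP (m i)) (t i)

/-- The exponential tilt of `P` at `x`: the coefficients of `P`, reweighted by `x ^ t` and
normalized to have sum `1`. -/
noncomputable def exponentialTilt (P : ℝ[X]) (x : ℝ) : ℝ[X] :=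
  C (P.eval x)⁻¹ * P.comp (C x * X)

theorem coeff_exponentialTilt (P : ℝ[X]) (x : ℝ) (t : ℕ) :
    (exponentialTilt P x).coeff t = P.coeff t * x ^ t / P.eval x := by
  rw [exponentialTilt, coeff_C_mul, comp_C_mul_X_coeff, inv_mul_eq_div]

theorem coeff_exponentialTilt_pow (P : ℝ[X]) (x : ℝ) (m t : ℕ) :
    (exponentialTilt P x ^ m).coeff t = (P ^ m).coeff t * x ^ t / P.eval x ^ m := by
  rw [exponentialTilt, mul_pow, ← C_pow, coeff_C_mul, ← pow_comp, comp_C_mul_X_coeff, inv_pow,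
    inv_mul_eq_div]

theorem eval_one_exponentialTilt {x : ℝ} (hx : P.eval x ≠ 0) :
    (exponentialTilt P x).eval 1 = 1 := by
  simp [exponentialTilt, eval_comp, hx]

theorem eval_one_derivative_exponentialTilt (P : ℝ[X]) (x : ℝ) :
    (exponentialTilt P x).derivative.eval 1 = x * P.derivative.eval x / P.eval x := by
  simp only [exponentialTilt, derivative_mul, derivative_C, zero_mul, derivative_comp, derivative_X,
    mul_one, zero_add, eval_mul, eval_C, eval_comp, eval_X]
  ring

theorem coeff_exponentialTilt_nonneg (hP : ∀ i, 0 ≤ P.coeff i) {x : ℝ} (hx : 0 ≤ x)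
    (hPx : 0 ≤ P.eval x) (t : ℕ) : 0 ≤ (exponentialTilt P x).coeff t := by
  rw [coeff_exponentialTilt]
  exact div_nonneg (mul_nonneg (hP t) (by positivity)) hPx

theorem coeff_exponentialTilt_pos {x : ℝ} (hx : 0 < x) (hPx : 0 < P.eval x) {t : ℕ}
    (ht : 0 < P.coeff t) : 0 < (exponentialTilt P x).coeff t := by
  rw [coeff_exponentialTilt]
  positivity

theorem eval_pos_of_coeff_zero_pos (hP : ∀ i, 0 ≤ P.coeff i) (hP0 : 0 < P.coeff 0) {x : ℝ}
    (hx : 0 < x) : 0 < P.eval x := by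
  rw [eval_eq_sum_range]
  exact sum_pos' (fun i _ => mul_nonneg (hP i) (by positivity)) ⟨0, by simp, by simpa using hP0⟩

theorem tendsto_log_coeff_pow_div {d : ℕ} (hP : ∀ i, 0 ≤ P.coeff i)
    (hPd : ∀ i ≤ d, 0 < P.coeff i) {x μ : ℝ} (hx : 0 < x)
    (hxμ : x * P.derivative.eval x = μ * P.eval x) (hμ : 0 < μ) (hμd : μ < d)
    {ι : Type*} {l : Filter ι} {m t : ι → ℕ} (hm : Tendsto m l atTop)
    (ht : ∀ᶠ i in l, (t i : ℝ) = m i * μ) :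
    Tendsto (fun i => Real.log ((P ^ m i).coeff (t i)) / m i) l
      (𝓝 (Real.log (P.eval x) - μ * Real.log x)) := by
  have hPx := eval_pos_of_coeff_zero_pos hP (hPd 0 d.zero_le) hx
  have htilt := coeff_exponentialTilt_nonneg hP hx.le hPx.le
  have htiltd := fun t ht => coeff_exponentialTilt_pos hx hPx (hPd t ht)
  have htilt1 := eval_one_exponentialTilt hPx.ne'
  have hmean : (exponentialTilt P x).derivative.eval 1 = μ := by
    rw [eval_one_derivative_exponentialTilt, hxμ, mul_div_cancel_right₀ _ hPx.ne']
  rw [← hmean] at hμ hμd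
  have hlim := (tendsto_log_coeff_pow_div_of_eval_one htilt htiltd htilt1 hμ hμd hm
    (hmean ▸ ht)).add_const (Real.log (P.eval x) - μ * Real.log x)
  rw [zero_add] at hlim
  refine hlim.congr' ?_
  filter_upwards [hm.eventually (eventually_coeff_pow_pos htilt htiltd htilt1 hμ hμd),
    hm.eventually_gt_atTop 0, ht] with i hi hmi hti
  have hpos := hi (t i) (hmean ▸ hti)
  rw [coeff_exponentialTilt_pow] at hpos ⊢
  have hcoeff_pos : (P ^ m i).coeff (t i) ≠ 0 := by
    intro h
    simp [h] at hpos
  rw [Real.log_div (by positivity) (by positivity), Real.log_mul hcoeff_pos (by positivity),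
    Real.log_pow, Real.log_pow, hti]
  field_simp
  ring

theorem tendsto_log_coeff_expand_pow_div {p d : ℕ} (hp : 0 < p) (hP : ∀ i, 0 ≤ P.coeff i)
    (hPd : ∀ i ≤ d, 0 < P.coeff i) {x μ : ℝ} (hx : 0 < x)
    (hxμ : x * (expand ℝ p P).derivative.eval x = μ * (expand ℝ p P).eval x) (hμ : 0 < μ)
    (hμd : μ < p * d) {ι : Type*} {l : Filter ι} {m t : ι → ℕ} (hm : Tendsto m l atTop)
    (ht : ∀ᶠ i in l, (t i : ℝ) = m i * μ) (hpt : ∀ᶠ i in l, p ∣ t i) :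
    Tendsto (fun i => Real.log ((expand ℝ p P ^ m i).coeff (t i)) / m i) l
      (𝓝 (Real.log ((expand ℝ p P).eval x) - μ * Real.log x)) := by
  have hp' : (0 : ℝ) < p := by exact_mod_cast hp
  have hsaddle : x ^ p * P.derivative.eval (x ^ p) = μ / p * P.eval (x ^ p) := by
    rw [derivative_expand, eval_mul, expand_eval, expand_eval] at hxμ
    simp only [eval_mul, eval_natCast, eval_pow, eval_X] at hxμ
    have hpow : x * x ^ (p - 1) = x ^ p := mul_pow_sub_one hp.ne' x
    field_simp
    linear_combination hxμ - p * P.derivative.eval (x ^ p) * hpow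
  have hlim := tendsto_log_coeff_pow_div (t := fun i => t i / p) hP hPd (pow_pos hx p) hsaddle
    (by positivity) (by rwa [div_lt_iff₀' hp']) hm (by
      filter_upwards [ht, hpt] with i hi hpi
      rw [Nat.cast_div hpi hp'.ne', hi, mul_div_assoc])
  rw [expand_eval]
  convert hlim.congr' ?_ using 2
  · rw [Real.log_pow]
    field_simp
  · filter_upwards [hpt] with i hpi
    rw [← map_pow, coeff_expand hp, if_pos hpi]

theorem tendsto_log_choose_div {α : ℝ} (hα0 : 0 < α) (hα1 : α < 1) {ι : Type*} {l : Filter ι}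
    {n w : ι → ℕ} (hn : Tendsto n l atTop) (hw : ∀ᶠ i in l, (w i : ℝ) = α * n i) :
    Tendsto (fun i => Real.log ((n i).choose (w i)) / n i) l (𝓝 (Real.binEntropy α)) := by
  have hα1' : 0 < 1 - α := sub_pos.mpr hα1
  have hcoeff (i : ℕ) : (1 + X : ℝ[X]).coeff i = (Nat.choose 1 i : ℕ) := by
    simpa using coeff_one_add_X_pow ℝ 1 i
  have heval : (1 + X : ℝ[X]).eval (α / (1 - α)) = (1 - α)⁻¹ := by
    rw [eval_add, eval_one, eval_X]
    field_simp
    ring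
  have hderiv : (1 + X : ℝ[X]).derivative = 1 := by simp
  have hlim := tendsto_log_coeff_pow_div (P := 1 + X) (d := 1) (x := α / (1 - α)) (μ := α)
    (fun i => by rw [hcoeff]; positivity)
    (fun i hi => by rw [hcoeff]; exact_mod_cast Nat.choose_pos hi)
    (by positivity) (by rw [hderiv, eval_one, heval, mul_one, div_eq_mul_inv]) hα0
    (by simpa using hα1) hn (hw.mono fun i hi => by rw [hi, mul_comm])
  simp only [coeff_one_add_X_pow] at hlim
  convert hlim using 2
  rw [heval, Real.binEntropy, Real.log_div hα0.ne' hα1'.ne', Real.log_inv, Real.log_inv]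
  ring

end CoefficientGrowth

section DoubleCounting

open scoped Pointwise Nat

theorem card_nsmul_sum_smul {G Y M : Type*} [Group G] [Fintype G] [Fintype Y] [MulAction G Y]
    [MulAction.IsPretransitive G Y] [AddCommMonoid M] (f : Y → M) (y : Y) :
    Fintype.card Y • ∑ g : G, f (g • y) = Fintype.card G • ∑ x, f x := by
  have orbit (x : Y) : ∑ g : G, f (g • x) = ∑ g : G, f (g • y) := by
    obtain ⟨h, rfl⟩ := MulAction.exists_smul_eq G y x
    simpa only [mul_smul, Equiv.coe_mulRight] using
      Equiv.sum_comp (Equiv.mulRight h) fun g => f (g • y)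
  calc Fintype.card Y • ∑ g : G, f (g • y) = ∑ x, ∑ g : G, f (g • x) := by
        simp only [orbit, sum_const, card_univ]
    _ = ∑ g : G, ∑ x, f (g • x) := sum_comm
    _ = ∑ _g : G, ∑ x, f x := sum_congr rfl fun g _ => Equiv.sum_comp (MulAction.toPerm g) f
    _ = Fintype.card G • ∑ x, f x := by rw [sum_const, card_univ]

theorem card_filter_perm_smul_mul_choose {β : Type*} [Fintype β] [DecidableEq β] (S : Finset β)
    (p : Finset β → Prop) [DecidablePred p] :
    #{σ : Equiv.Perm β | p (σ • S)} * (Fintype.card β).choose #S =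
      #{T | #T = #S ∧ p T} * (Fintype.card β)! := by
  have : MulAction.IsPretransitive (Equiv.Perm β) (Set.powersetCard β #S) :=
    Set.powersetCard.isPretransitive
  have hcard : Fintype.card (Set.powersetCard β #S) = (Fintype.card β).choose #S := by
    rw [← Nat.card_eq_fintype_card, Set.powersetCard.card, Nat.card_eq_fintype_card]
  have h := card_nsmul_sum_smul (G := Equiv.Perm β)
    (fun T : Set.powersetCard β #S => if p T then 1 else 0) (Set.powersetCard.ofCard rfl)
  have hperm : ∑ σ : Equiv.Perm β,
      (if p ↑(σ • Set.powersetCard.ofCard (rfl : #S = #S)) then 1 else 0) =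
        #{σ : Equiv.Perm β | p (σ • S)} := by
    simp only [Set.powersetCard.coe_smul, Set.powersetCard.val_ofCard, card_filter]
  have hset : ∑ T : Set.powersetCard β #S, (if p T then 1 else 0) = #{T | #T = #S ∧ p T} := by
    rw [← filter_filter, card_filter]
    exact (sum_subtype _ (by simp) fun T => if p T then 1 else 0).symm
  rw [hperm, hset, hcard, Fintype.card_perm, smul_eq_mul, smul_eq_mul] at h
  rw [mul_comm, h, mul_comm]

end DoubleCounting

section WeightEnumerator

open Polynomial

/-- The weight enumerator `∑ A ∈ 𝒜, X ^ #A` of a family `𝒜` of finite sets. -/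
noncomputable def weightEnumerator {κ : Type*} (R : Type*) [Semiring R] (𝒜 : Finset (Finset κ)) :
    R[X] :=
  ∑ A ∈ 𝒜, X ^ #A

theorem coeff_weightEnumerator {κ R : Type*} [Semiring R] (𝒜 : Finset (Finset κ)) (t : ℕ) :
    (weightEnumerator R 𝒜).coeff t = #{A ∈ 𝒜 | #A = t} := by
  simp only [weightEnumerator, finsetSum_coeff, coeff_X_pow, eq_comm (a := t), sum_boole]

/-- A finite subset of `β ≃ ι × κ` as the family of its slices in `κ`. -/
def sliceEquiv {ι κ β : Type*} [Fintype κ] [Fintype β] [DecidableEq κ] [DecidableEq β]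
    (e : ι × κ ≃ β) : Finset β ≃ (ι → Finset κ) where
  toFun T i := {c | e (i, c) ∈ T}
  invFun A := {b | (e.symm b).2 ∈ A (e.symm b).1}
  left_inv T := by ext; simp
  right_inv A := by ext; simp

variable {ι κ β : Type*} [Fintype ι] [Fintype κ] [Fintype β] [DecidableEq κ]
  [DecidableEq β]

theorem sum_card_sliceEquiv (e : ι × κ ≃ β) (T : Finset β) : ∑ i, #(sliceEquiv e T i) = #T := by
  classical
  simp only [sliceEquiv, Equiv.coe_fn_mk, card_filter]
  rw [← Fintype.sum_prod_type' (f := fun i c => if e (i, c) ∈ T then 1 else 0)]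
  rw [e.sum_comp fun b => if b ∈ T then 1 else 0]
  simp

theorem weightEnumerator_slices_mem {R : Type*} [CommSemiring R] (e : ι × κ ≃ β)
    (𝒜 : Finset (Finset κ)) :
    weightEnumerator R {T : Finset β | ∀ i, sliceEquiv e T i ∈ 𝒜} =
      weightEnumerator R 𝒜 ^ Fintype.card ι := by
  classical
  calc weightEnumerator R {T : Finset β | ∀ i, sliceEquiv e T i ∈ 𝒜}
      = ∑ A ∈ Fintype.piFinset fun _ : ι => 𝒜, ∏ i, (X : R[X]) ^ #(A i) := by
        refine sum_equiv (sliceEquiv e) (by simp) fun T _ => ?_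
        rw [prod_pow_eq_pow_sum, sum_card_sliceEquiv]
    _ = weightEnumerator R 𝒜 ^ Fintype.card ι := by
        rw [← prod_univ_sum (fun _ => 𝒜) fun _ A => X ^ #A, prod_const, card_univ, weightEnumerator]

theorem two_mul_expand_two_contract_two {R : Type*} [CommRing R] (P : R[X]) :
    2 * expand R 2 (contract 2 P) = P + P.comp (-X) := by
  ext t
  have h2 : (2 : R[X]) = C 2 := rfl
  rw [h2, coeff_C_mul, coeff_expand two_pos, coeff_add, neg_eq_neg_one_mul, ← C_1, ← C_neg,
    comp_C_mul_X_coeff]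
  split_ifs with h
  · rw [coeff_contract two_ne_zero, Nat.div_mul_cancel h, (even_iff_two_dvd.mpr h).neg_one_pow]
    ring
  · rw [Odd.neg_one_pow (by rwa [← Nat.not_even_iff_odd, even_iff_two_dvd])]
    ring

/-- The weight enumerator of the single parity-check code of length `k`. -/
noncomputable def evenWeightEnumerator (k : ℕ) : ℝ[X] :=
  weightEnumerator ℝ {A : Finset (Fin k) | Even #A}

theorem evenWeightEnumerator_eq_expand (k : ℕ) :
    evenWeightEnumerator k = expand ℝ 2 (contract 2 ((1 + X) ^ k)) := by
  ext t
  rw [evenWeightEnumerator, coeff_weightEnumerator, coeff_expand two_pos,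
    coeff_contract two_ne_zero, filter_filter]
  split_ifs with ht
  · have hfilter : ({A | Even #A ∧ #A = t} : Finset (Finset (Fin k))) = powersetCard t univ := by
      ext A
      simp only [mem_filter, mem_univ, true_and, mem_powersetCard_univ, and_iff_right_iff_imp]
      rintro rfl
      exact even_iff_two_dvd.mpr ht
    rw [Nat.div_mul_cancel ht, coeff_one_add_X_pow, hfilter, card_powersetCard, card_univ,
      Fintype.card_fin]
  · have hfilter : ({A | Even #A ∧ #A = t} : Finset (Finset (Fin k))) = ∅ :=
      filter_false_of_mem fun A _ hA => ht (hA.2 ▸ hA.1.two_dvd)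
    rw [hfilter, card_empty, Nat.cast_zero]

theorem two_mul_evenWeightEnumerator (k : ℕ) :
    2 * evenWeightEnumerator k = (1 + X) ^ k + (1 - X) ^ k := by
  rw [evenWeightEnumerator_eq_expand, two_mul_expand_two_contract_two]
  simp [sub_eq_add_neg]

theorem eval_evenWeightEnumerator (k : ℕ) (x : ℝ) :
    (evenWeightEnumerator k).eval x = ((1 + x) ^ k + (1 - x) ^ k) / 2 := by
  have h := congrArg (eval x) (two_mul_evenWeightEnumerator k)
  simp only [eval_mul, eval_ofNat, eval_add, eval_sub, eval_pow, eval_one, eval_X] at h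
  linarith

theorem eval_derivative_evenWeightEnumerator (k : ℕ) (x : ℝ) :
    (evenWeightEnumerator k).derivative.eval x =
      k * ((1 + x) ^ (k - 1) - (1 - x) ^ (k - 1)) / 2 := by
  have h := congrArg (fun P => P.derivative.eval x) (two_mul_evenWeightEnumerator k)
  simp only [derivative_mul, derivative_ofNat, zero_mul, zero_add, eval_mul, eval_ofNat,
    derivative_add, derivative_pow, map_natCast, derivative_one, derivative_X, mul_one,
    derivative_sub, zero_sub, mul_neg, eval_add, eval_natCast, eval_pow, eval_one, eval_X,
    eval_neg, eval_sub] at h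
  linarith

theorem two_dvd_of_coeff_evenWeightEnumerator_pow_ne_zero {k m t : ℕ}
    (h : (evenWeightEnumerator k ^ m).coeff t ≠ 0) : 2 ∣ t := by
  rw [evenWeightEnumerator_eq_expand, ← map_pow, coeff_expand two_pos] at h
  exact (ite_ne_right_iff.mp h).1

end WeightEnumerator

section Ensemble

open scoped Pointwise Nat

variable {n j k : ℕ}

/-- The check sockets are all the sockets when `k` divides `n * j`. -/
def checkSocketEquiv (h : k ∣ n * j) : Fin (n * j / k) × Fin k ≃ Fin (n * j) :=
  finProdFinEquiv.trans (finCongr (Nat.div_mul_cancel h))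

theorem checkSocketEquiv_apply (h : k ∣ n * j) (x : Fin (n * j / k) × Fin k) :
    checkSocketEquiv h x = checkSocket n j k x.1 x.2 := by
  ext
  simp only [checkSocketEquiv, checkSocket, Equiv.trans_apply, finCongr_apply_coe,
    finProdFinEquiv_apply_val]
  ring

/-- The variable sockets labelled `1` by `z`. -/
def labelledSockets (j : ℕ) (z : Fin n → Fin 2) : Finset (Fin (n * j)) :=
  {s | z (varNode n j s) = 1}

theorem card_labelledSockets (j : ℕ) (z : Fin n → Fin 2) :
    #(labelledSockets j z) = j * #{i | z i = 1} := by
  have h : #(labelledSockets j z) =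
      #(({i | z i = 1} : Finset (Fin n)) ×ˢ (univ : Finset (Fin j))) :=
    card_equiv finProdFinEquiv.symm fun s => by
      simp only [labelledSockets, mem_filter, mem_univ, true_and, mem_product, and_true]
      rfl
  rw [h, card_product, card_univ, Fintype.card_fin, mul_comm]

theorem isCodeword_iff_even_card_sliceEquiv (h : k ∣ n * j) (σ : Equiv.Perm (Fin (n * j)))
    (z : Fin n → Fin 2) :
    IsCodeword n j k σ z ↔
      ∀ c, Even #(sliceEquiv (checkSocketEquiv h) (σ • labelledSockets j z) c) := by
  have hval (a : Fin 2) : (a : ℕ) = if a = 1 then 1 else 0 := by decide +revert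
  refine forall_congr' fun c => ?_
  simp only [hval, ← card_filter, sliceEquiv, Equiv.coe_fn_mk, checkSocketEquiv_apply]
  have hmem (s : Fin (n * j)) : s ∈ σ • labelledSockets j z ↔ z (varNode n j (σ.symm s)) = 1 := by
    rw [← inv_smul_mem_iff]
    simp [labelledSockets]
  simp only [hmem]

theorem card_filter_card_eq_one_eq (n w : ℕ) :
    #{z : Fin n → Fin 2 | #{i | z i = 1} = w} = n.choose w := by
  rw [← card_fin n, ← card_powersetCard, card_fin]
  refine card_nbij' (fun z => ({i | z i = 1} : Finset (Fin n))) (fun T i => if i ∈ T then 1 else 0)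
    (fun z hz => by simpa using hz) (fun T hT => by simpa using hT) (fun z _ => ?_)
    (fun T _ => by simp)
  have hbit (a : Fin 2) : (if a = 1 then 1 else 0) = a := by decide +revert
  simp [hbit]

open Classical in
theorem card_filter_isCodeword_mul_choose (h : k ∣ n * j) (z : Fin n → Fin 2) :
    (#{σ | IsCodeword n j k σ z} * (n * j).choose (j * #{i | z i = 1}) : ℝ) =
      (evenWeightEnumerator k ^ (n * j / k)).coeff (j * #{i | z i = 1}) * (n * j)! := by
  have hperm := card_filter_perm_smul_mul_choose (labelledSockets j z)
    fun T => ∀ c, Even #(sliceEquiv (checkSocketEquiv h) T c)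
  have hslices := weightEnumerator_slices_mem (R := ℝ) (checkSocketEquiv h) {A | Even #A}
  rw [Fintype.card_fin] at hslices
  rw [evenWeightEnumerator, ← hslices, coeff_weightEnumerator, filter_filter]
  simp only [← isCodeword_iff_even_card_sliceEquiv, card_labelledSockets, Fintype.card_fin,
    and_comm (a := _ = _)] at hperm
  simp only [mem_filter_univ]
  exact_mod_cast hperm

open Classical in
theorem sum_countWeight {α : ℝ} {w : ℕ} (hw : (w : ℝ) = α * n) :
    ∑ σ, countWeight n j k σ α =
      ∑ z : Fin n → Fin 2 with #{i | z i = 1} = w, #{σ | IsCodeword n j k σ z} := by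
  simp only [countWeight, ← hw, Nat.cast_inj, Nat.card_eq_fintype_card, Fintype.card_subtype,
    card_filter, sum_filter, ite_and]
  rw [sum_comm]
  refine sum_congr rfl fun z _ => ?_
  split_ifs <;> simp [*]

theorem expectWeight_eq {α : ℝ} {w : ℕ} (h : k ∣ n * j) (hw : (w : ℝ) = α * n) :
    expectWeight n j k α = n.choose w * (evenWeightEnumerator k ^ (n * j / k)).coeff (j * w) /
      (n * j).choose (j * w) := by
  classical
  have hterm (z : Fin n → Fin 2) (hz : #{i | z i = 1} = w) :
      (#{σ | IsCodeword n j k σ z} : ℝ) =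
        (evenWeightEnumerator k ^ (n * j / k)).coeff (j * w) * (n * j)! /
          (n * j).choose (j * w) := by
    subst hz
    refine eq_div_of_mul_eq ?_ (card_filter_isCodeword_mul_choose h z)
    have hle : j * #{i | z i = 1} ≤ n * j := by
      rw [mul_comm n]
      exact Nat.mul_le_mul_left j (card_finset_fin_le _)
    exact_mod_cast (Nat.choose_pos hle).ne'
  have hfactorial : ((n * j)! : ℝ) ≠ 0 := by positivity
  rw [expectWeight, ← Nat.cast_sum, sum_countWeight hw, Nat.cast_sum,
    sum_congr rfl fun z hz => hterm z (mem_filter.mp hz).2, sum_const, card_filter_card_eq_one_eq,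
    nsmul_eq_mul]
  field_simp

theorem two_dvd_of_expectWeight_pos {α : ℝ} {w : ℕ} (h : k ∣ n * j) (hw : (w : ℝ) = α * n)
    (hpos : 0 < expectWeight n j k α) : 2 ∣ j * w := by
  refine two_dvd_of_coeff_evenWeightEnumerator_pow_ne_zero (k := k) (m := n * j / k) fun hzero => ?_
  rw [expectWeight_eq h hw, hzero, mul_zero, zero_div] at hpos
  exact hpos.false

end Ensemble

section Growth

open Filter
open scoped Topology

theorem tendsto_log_coeff_evenWeightEnumerator_pow_div {k : ℕ} {x μ : ℝ} (hx : 0 < x)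
    (hxμ : x * (evenWeightEnumerator k).derivative.eval x = μ * (evenWeightEnumerator k).eval x)
    (hμ : 0 < μ) (hμk : μ < (2 : ℕ) * (k / 2 : ℕ)) {ι : Type*} {l : Filter ι} {m t : ι → ℕ}
    (hm : Tendsto m l atTop) (ht : ∀ᶠ i in l, (t i : ℝ) = m i * μ) (ht2 : ∀ᶠ i in l, 2 ∣ t i) :
    Tendsto (fun i => Real.log ((evenWeightEnumerator k ^ m i).coeff (t i)) / m i) l
      (𝓝 (Real.log ((evenWeightEnumerator k).eval x) - μ * Real.log x)) := by
  have hcoeff (i : ℕ) : (Polynomial.contract 2 ((1 + Polynomial.X : Polynomial ℝ) ^ k)).coeff i =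
      k.choose (i * 2) := by
    rw [Polynomial.coeff_contract two_ne_zero, Polynomial.coeff_one_add_X_pow]
  rw [evenWeightEnumerator_eq_expand] at hxμ ⊢
  refine tendsto_log_coeff_expand_pow_div two_pos (fun i => ?_) (fun i hi => ?_) hx hxμ hμ hμk hm
    ht ht2
  · rw [hcoeff]
    positivity
  · rw [hcoeff]
    exact_mod_cast Nat.choose_pos (by omega)

theorem log_expectWeight_div_eq {n j k w : ℕ} (hdvd : k ∣ n * j) (hj : 0 < j) (hn : 0 < n) {α : ℝ}
    (hw : (w : ℝ) = α * n) (hpos : 0 < expectWeight n j k α) :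
    Real.log (expectWeight n j k α) / n = Real.log (n.choose w) / n +
      j / k * (Real.log ((evenWeightEnumerator k ^ (n * j / k)).coeff (j * w)) /
        (n * j / k : ℕ)) -
      j * (Real.log ((n * j).choose (j * w)) / (n * j : ℕ)) := by
  have hk : (k : ℝ) ≠ 0 := by
    have := ne_zero_of_dvd_ne_zero (Nat.mul_pos hn hj).ne' hdvd
    exact_mod_cast this
  have hn' : (n : ℝ) ≠ 0 := by exact_mod_cast hn.ne'
  have hj' : (j : ℝ) ≠ 0 := by exact_mod_cast hj.ne'
  rw [expectWeight_eq hdvd hw] at hpos ⊢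
  have hne := hpos.ne'
  rw [div_ne_zero_iff, mul_ne_zero_iff] at hne
  rw [Real.log_div (mul_ne_zero hne.1.1 hne.1.2) hne.2, Real.log_mul hne.1.1 hne.1.2,
    Nat.cast_div hdvd hk, Nat.cast_mul]
  field_simp

theorem tendsto_log_expectWeight_div {j k : ℕ} (hj : 0 < j) {α x : ℝ} (hα : 0 < α)
    (hαk : k * α < (2 : ℕ) * (k / 2 : ℕ)) (hx : 0 < x)
    (hxα : x * (evenWeightEnumerator k).derivative.eval x =
      k * α * (evenWeightEnumerator k).eval x)
    {l : Filter ℕ} (hl : l ≤ atTop)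
    (hn : ∀ᶠ n : ℕ in l, k ∣ n * j ∧ (∃ w : ℕ, (w : ℝ) = α * n) ∧ 0 < expectWeight n j k α) :
    Tendsto (fun n => Real.log (expectWeight n j k α) / n) l
      (𝓝 (j / k * Real.log ((evenWeightEnumerator k).eval x) - j * α * Real.log x -
        (j - 1) * Real.binEntropy α)) := by
  have hk : (0 : ℝ) < k := by
    refine Nat.cast_pos.mpr (k.pos_of_ne_zero ?_)
    rintro rfl
    simp at hαk
  have hα1 : α < 1 := by
    have : ((2 : ℕ) * (k / 2 : ℕ) : ℝ) ≤ k := by exact_mod_cast Nat.mul_div_le k 2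
    nlinarith
  simp only [eventually_and] at hn
  obtain ⟨hdvd, hweight, hpos⟩ := hn
  obtain ⟨w, hw⟩ : ∃ w : ℕ → ℕ, ∀ᶠ n in l, (w n : ℝ) = α * n :=
    ⟨fun n => ⌊α * n⌋₊, hweight.mono fun n ⟨w, hw⟩ => by simp only [← hw, Nat.floor_natCast]⟩
  have hid : Tendsto (fun n : ℕ => n) l atTop := hl
  have hsockets : Tendsto (fun n => n * j) l atTop := hid.atTop_mul_const' hj
  have hchecks : Tendsto (fun n => n * j / k) l atTop :=
    (Nat.tendsto_div_const_atTop (by exact_mod_cast hk.ne')).comp hsockets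
  have hlim_nodes := tendsto_log_choose_div hα hα1 hid hw
  have hlim_sockets := tendsto_log_choose_div hα hα1 hsockets (w := fun n => j * w n) <| by
    filter_upwards [hw] with n hwn
    push_cast
    rw [hwn]
    ring
  have hlim_checks := tendsto_log_coeff_evenWeightEnumerator_pow_div hx hxα (by positivity) hαk
    hchecks (t := fun n => j * w n) (by
      filter_upwards [hdvd, hw] with n hn hwn
      rw [Nat.cast_div hn hk.ne']
      push_cast
      rw [hwn]
      field_simp) (by
      filter_upwards [hdvd, hw, hpos] with n hn hwn hposn
      exact two_dvd_of_expectWeight_pos hn hwn hposn)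
  convert ((hlim_nodes.add (hlim_checks.const_mul (j / k : ℝ))).sub
    (hlim_sockets.const_mul (j : ℝ))).congr' ?_ using 2
  · field_simp
    ring
  · filter_upwards [hdvd, hw, hpos, hl (eventually_gt_atTop 0)] with n hn hwn hposn hn0
    exact (log_expectWeight_div_eq hn hj hn0 hwn hposn).symm

end Growth

/-- for `j, k ≥ 2`, `d = k` for even `k` and `d = k - 1` for odd
`k`, and `0 < α < d/k`, the growth rate of the weight distribution of the
`(j,k)`-regular configuration-model LDPC ensemble equals
`G_1(α) = (j/k) log[((1+x₀)^k + (1-x₀)^k)/2] - j α log x₀ - (j-1) h(α)`,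
where `x₀` is the (unique) positive solution of
`α[(1+x₀)^k + (1-x₀)^k] = x₀[(1+x₀)^{k-1} - (1-x₀)^{k-1}]`. -/
theorem stmt_15 (j k : ℕ) (hj : 2 ≤ j) (hk : 2 ≤ k) (d : ℕ)
    (hd : d = if Even k then k else k - 1)
    (α : ℝ) (h0 : 0 < α) (h1 : α < (d : ℝ) / (k : ℝ))
    (x0 : ℝ) (hx0pos : 0 < x0)
    (hx0eq : α * ((1 + x0) ^ k + (1 - x0) ^ k) =
      x0 * ((1 + x0) ^ (k - 1) - (1 - x0) ^ (k - 1))) :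
    Filter.Tendsto
      (fun n : ℕ => (1 / n : ℝ) * Real.log (expectWeight n j k α))
      (Filter.atTop ⊓ Filter.principal
        {n : ℕ | 0 < n ∧ k ∣ n * j ∧ (∃ w : ℕ, (w : ℝ) = α * (n : ℝ)) ∧
          0 < expectWeight n j k α})
      (nhds (((j : ℝ) / (k : ℝ)) * Real.log (((1 + x0) ^ k + (1 - x0) ^ k) / 2) -
        (j : ℝ) * α * Real.log x0 -
        ((j : ℝ) - 1) * (-(α * Real.log α) - (1 - α) * Real.log (1 - α)))) := by
  have hd2 : d = 2 * (k / 2) := by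
    split_ifs at hd with hkeven
    · rw [hd, Nat.two_mul_div_two_of_even hkeven]
    · have := Nat.not_even_iff.mp hkeven
      omega
  have hk0 : (0 : ℝ) < k := by exact_mod_cast two_pos.trans_le hk
  have hαk : k * α < (2 : ℕ) * (k / 2 : ℕ) := by
    rw [lt_div_iff₀' hk0, hd2] at h1
    exact_mod_cast h1
  have hsaddle : x0 * (evenWeightEnumerator k).derivative.eval x0 =
      k * α * (evenWeightEnumerator k).eval x0 := by
    rw [eval_derivative_evenWeightEnumerator, eval_evenWeightEnumerator]
    linear_combination (-(k : ℝ) / 2) * hx0eq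
  have hentropy : Real.binEntropy α = -(α * Real.log α) - (1 - α) * Real.log (1 - α) := by
    rw [Real.binEntropy_eq_negMulLog_add_negMulLog_one_sub, Real.negMulLog, Real.negMulLog]
    ring
  simp only [one_div_mul_eq_div]
  rw [← eval_evenWeightEnumerator, ← hentropy]
  exact tendsto_log_expectWeight_div (two_pos.trans_le hj) h0 hαk hx0pos hsaddle inf_le_left
    (Filter.eventually_inf_principal.mpr (.of_forall fun n hn => hn.2))
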